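/- Failure of Korn's second inequality in L^∞ (de Leeuw–Mirkil, Mityagin): Let Ω be the open unit ball of ℝ². There exists no constant C > 0 such that for every smooth vector field u : ℝ² → ℝ², the infimum over antisymmetric 2×2 real matrices A of the supremum over x ∈ Ω of ‖Du(x) − A‖_F is bounded by C times the supremum over x ∈ Ω of ‖(Du(x) + Du(x)ᵀ)/2‖_F. Equivalently, for every C > 0 there exists a smooth u : ℝ² → ℝ² with inf_A sup_{x∈Ω} ‖Du(x) − A‖_F > C · sup_{x∈Ω} ‖(Du(x) + Du(x)ᵀ)/2‖_F. -/

import Mathlib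

open Matrix

/-- The Jacobian matrix of `u : ℝ² → ℝ²` at `x`: `(jacobian u x) i j = ∂uᵢ/∂xⱼ (x)`. -/
noncomputable def jacobian (u : EuclideanSpace ℝ (Fin 2) → EuclideanSpace ℝ (Fin 2))
    (x : EuclideanSpace ℝ (Fin 2)) : Matrix (Fin 2) (Fin 2) ℝ :=
  fun i j => fderiv ℝ u x (EuclideanSpace.single j 1) i

/-- Frobenius norm of a real `2 × 2` matrix. -/
noncomputable def frobNorm (M : Matrix (Fin 2) (Fin 2) ℝ) : ℝ :=
  Real.sqrt (∑ i, ∑ j, (M i j) ^ 2)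

/-!
A rotation whose angle depends slowly on the radius is far from rigid but has small strain. For the
quarter turn `J` and `u x = φ (‖x‖²) • J x` one has `Du x = φ (‖x‖²) • J + 2 φ' (‖x‖²) • (J x) xᵀ`;
the first summand is antisymmetric, so the strain is governed by `s φ' s` alone. For
`φ s = log (s + ε)` this is at most `1` for every `ε > 0`, while the difference of `Du` between `0`
and any other fixed point grows like `log (1 / ε)`. The oscillation of `Du` is at most twice its
distance to any constant matrix, so no constant works for all `ε`. After a translation, any two
points of a bounded domain can play the roles of `0` and the other point.
-/

open scoped Matrix.Norms.Frobenius in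
lemma frobNorm_eq_norm (M : Matrix (Fin 2) (Fin 2) ℝ) : frobNorm M = ‖M‖ := by
  simp only [frobNorm, frobenius_norm_def, Real.sqrt_eq_rpow, Real.norm_eq_abs, Real.rpow_two,
    sq_abs]

open scoped Matrix.Norms.Frobenius in
lemma frobNorm_sub_le_add (M N A : Matrix (Fin 2) (Fin 2) ℝ) :
    frobNorm (M - N) ≤ frobNorm (M - A) + frobNorm (N - A) := by
  simpa only [frobNorm_eq_norm, dist_eq_norm] using dist_triangle_right M N A

lemma continuous_frobNorm : Continuous frobNorm := by
  unfold frobNorm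
  fun_prop

lemma abs_entry_le_frobNorm (M : Matrix (Fin 2) (Fin 2) ℝ) (i j : Fin 2) :
    |M i j| ≤ frobNorm M :=
  Real.abs_le_sqrt <| calc
    M i j ^ 2 ≤ ∑ l, M i l ^ 2 :=
      Finset.single_le_sum (f := fun l => M i l ^ 2) (fun _ _ => sq_nonneg _) (Finset.mem_univ j)
    _ ≤ ∑ k, ∑ l, M k l ^ 2 :=
      Finset.single_le_sum (f := fun k => ∑ l, M k l ^ 2)
        (fun _ _ => Finset.sum_nonneg fun _ _ => sq_nonneg _) (Finset.mem_univ i)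

lemma le_biSup_of_isBounded {E : Type*} [PseudoMetricSpace E] [ProperSpace E] {f : E → ℝ}
    (hf : Continuous f) {Ω : Set E} (hΩ : Bornology.IsBounded Ω) {p : E} (hp : p ∈ Ω) :
    f p ≤ ⨆ x ∈ Ω, f x := by
  refine le_ciSup₂ (f := fun x (_ : x ∈ Ω) => f x) ?_ p hp
  refine (hΩ.isCompact_closure.bddAbove_image hf.continuousOn).mono ?_
  rintro _ ⟨_, ⟨x, rfl⟩, hx, rfl⟩
  exact ⟨x, subset_closure hx, rfl⟩

section Jacobian

variable {u : EuclideanSpace ℝ (Fin 2) → EuclideanSpace ℝ (Fin 2)}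

lemma continuous_jacobian (hu : ContDiff ℝ 1 u) : Continuous (jacobian u) :=
  continuous_pi fun i => continuous_pi fun _ => (EuclideanSpace.proj (𝕜 := ℝ) i).continuous.comp
    ((hu.continuous_fderiv one_ne_zero).clm_apply continuous_const)

lemma jacobian_comp_sub (u : EuclideanSpace ℝ (Fin 2) → EuclideanSpace ℝ (Fin 2))
    (c x : EuclideanSpace ℝ (Fin 2)) :
    jacobian (fun y => u (y - c)) x = jacobian u (x - c) := by
  ext i j
  simp only [jacobian, fderiv_comp_sub]

lemma frobNorm_jacobian_sub_le_two_mul_sInf (hu : ContDiff ℝ 1 u)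
    {Ω : Set (EuclideanSpace ℝ (Fin 2))} (hΩ : Bornology.IsBounded Ω)
    {p q : EuclideanSpace ℝ (Fin 2)} (hp : p ∈ Ω) (hq : q ∈ Ω) :
    frobNorm (jacobian u p - jacobian u q) ≤
      2 * sInf {r : ℝ | ∃ A : Matrix (Fin 2) (Fin 2) ℝ, Aᵀ = -A ∧
        r = ⨆ x ∈ Ω, frobNorm (jacobian u x - A)} := by
  rw [← div_le_iff₀' two_pos]
  refine le_csInf ⟨_, 0, by simp, rfl⟩ ?_
  rintro _ ⟨A, -, rfl⟩
  have hcont : Continuous fun x => frobNorm (jacobian u x - A) :=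
    continuous_frobNorm.comp ((continuous_jacobian hu).sub continuous_const)
  linarith [frobNorm_sub_le_add (jacobian u p) (jacobian u q) A,
    le_biSup_of_isBounded hcont hΩ hp, le_biSup_of_isBounded hcont hΩ hq]

end Jacobian

lemma hasFDerivAt_comp_norm_sq_smul {E F : Type*} [NormedAddCommGroup E] [InnerProductSpace ℝ E]
    [NormedAddCommGroup F] [NormedSpace ℝ F] {φ : ℝ → ℝ} {φ' : ℝ} {x : E}
    (hφ : HasDerivAt φ φ' (‖x‖ ^ 2)) (L : E →L[ℝ] F) :
    HasFDerivAt (fun y => φ (‖y‖ ^ 2) • L y)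
      (φ (‖x‖ ^ 2) • L + (2 * φ') • (innerSL ℝ x).smulRight (L x)) x := by
  have hnorm : HasFDerivAt (fun y : E => ‖y‖ ^ 2) (2 • innerSL ℝ x) x :=
    (hasStrictFDerivAt_norm_sq x).hasFDerivAt
  refine ((hφ.comp_hasFDerivAt x hnorm).smul L.hasFDerivAt).congr_fderiv ?_
  ext v
  simp only [Function.comp_apply, _root_.add_apply, _root_.smul_apply,
    ContinuousLinearMap.smulRight_apply, coe_innerSL_apply]
  module

/-- The vector field `x ↦ φ(‖x‖²) A x`, whose amplitude relative to the linear field `A` depends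
only on the radius. The profile `φ` is a function of the squared radius so that the field is as
smooth as `φ`, including at the origin. -/
noncomputable def radialField (φ : ℝ → ℝ) (A : Matrix (Fin 2) (Fin 2) ℝ)
    (x : EuclideanSpace ℝ (Fin 2)) : EuclideanSpace ℝ (Fin 2) :=
  φ (‖x‖ ^ 2) • toEuclideanCLM (𝕜 := ℝ) A x

/-- The rotation of the plane by `π / 2`, the generator of the antisymmetric `2 × 2` matrices. -/
def quarterTurn : Matrix (Fin 2) (Fin 2) ℝ := !![0, -1; 1, 0]

section RadialField

variable {φ : ℝ → ℝ} {φ' : ℝ} {x : EuclideanSpace ℝ (Fin 2)}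

lemma contDiff_radialField {n : WithTop ℕ∞} (hφ : ∀ s, 0 ≤ s → ContDiffAt ℝ n φ s)
    (A : Matrix (Fin 2) (Fin 2) ℝ) : ContDiff ℝ n (radialField φ A) := by
  have hamplitude : ContDiff ℝ n fun x : EuclideanSpace ℝ (Fin 2) => φ (‖x‖ ^ 2) :=
    contDiff_iff_contDiffAt.2 fun x =>
      (hφ _ (sq_nonneg ‖x‖)).comp x (contDiff_norm_sq ℝ).contDiffAt
  exact hamplitude.smul (ContinuousLinearMap.contDiff _)

lemma jacobian_radialField_apply (hφ : HasDerivAt φ φ' (‖x‖ ^ 2)) (A : Matrix (Fin 2) (Fin 2) ℝ)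
    (i j : Fin 2) :
    jacobian (radialField φ A) x i j = φ (‖x‖ ^ 2) * A i j + 2 * φ' * ((A *ᵥ x) i * x j) := by
  have hDu : fderiv ℝ (radialField φ A) x = _ := (hasFDerivAt_comp_norm_sq_smul hφ _).fderiv
  simp [jacobian, hDu, EuclideanSpace.inner_single_right, mul_comm]

lemma jacobian_radialField_quarterTurn (hφ : HasDerivAt φ φ' (‖x‖ ^ 2)) :
    jacobian (radialField φ quarterTurn) x =
      !![-(2 * φ' * (x 0 * x 1)), -φ (‖x‖ ^ 2) - 2 * φ' * x 1 ^ 2;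
         φ (‖x‖ ^ 2) + 2 * φ' * x 0 ^ 2, 2 * φ' * (x 0 * x 1)] := by
  ext i j
  rw [jacobian_radialField_apply hφ]
  fin_cases i <;> fin_cases j <;>
    simp [quarterTurn, vecHead, vecTail, sq, sub_eq_add_neg, mul_comm (x 1)]

lemma frobNorm_strain_radialField_quarterTurn (hφ : HasDerivAt φ φ' (‖x‖ ^ 2)) :
    frobNorm ((1 / 2 : ℝ) • (jacobian (radialField φ quarterTurn) x +
      (jacobian (radialField φ quarterTurn) x)ᵀ)) = √2 * |φ' * ‖x‖ ^ 2| := by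
  have hstrain : (1 / 2 : ℝ) • (jacobian (radialField φ quarterTurn) x +
      (jacobian (radialField φ quarterTurn) x)ᵀ) =
      φ' • !![-(2 * x 0 * x 1), x 0 ^ 2 - x 1 ^ 2; x 0 ^ 2 - x 1 ^ 2, 2 * x 0 * x 1] := by
    rw [jacobian_radialField_quarterTurn hφ]
    ext i j
    fin_cases i <;> fin_cases j <;>
      simp only [Fin.zero_eta, Fin.mk_one, Fin.isValue, Matrix.smul_apply, Matrix.add_apply,
        transpose_apply, of_apply, cons_val', cons_val_fin_one, cons_val_zero, cons_val_one,
        smul_eq_mul] <;>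
      ring
  rw [hstrain, frobNorm, ← Real.sqrt_sq_eq_abs, ← Real.sqrt_mul zero_le_two,
    EuclideanSpace.norm_sq_eq]
  congr 1
  simp only [Fin.isValue, Matrix.smul_apply, of_apply, cons_val', cons_val_fin_one, smul_eq_mul,
    Fin.sum_univ_two, cons_val_zero, cons_val_one, Real.norm_eq_abs, sq_abs]
  ring

end RadialField

/-- The infinitesimal rotation field with angle `log (‖x‖² + ε)`. For `ε > 0` it is a smooth
regularization of `x ↦ log (‖x‖²) • J x`, which has bounded strain but unbounded gradient at the
origin. -/
noncomputable def logRotation (ε : ℝ) : EuclideanSpace ℝ (Fin 2) → EuclideanSpace ℝ (Fin 2) :=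
  radialField (fun s => Real.log (s + ε)) quarterTurn

section LogRotation

variable {ε : ℝ}

lemma contDiff_logRotation {n : WithTop ℕ∞} (hε : 0 < ε) : ContDiff ℝ n (logRotation ε) :=
  contDiff_radialField
    (fun _ hs => (contDiffAt_id.add contDiffAt_const).log (add_pos_of_nonneg_of_pos hs hε).ne') _

lemma hasDerivAt_log_add_const {s : ℝ} (hs : s + ε ≠ 0) :
    HasDerivAt (fun s => Real.log (s + ε)) (s + ε)⁻¹ s := by
  simpa only [one_div] using ((hasDerivAt_id' s).add_const ε).log hs

lemma frobNorm_strain_logRotation_le (hε : 0 < ε) (x : EuclideanSpace ℝ (Fin 2)) :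
    frobNorm ((1 / 2 : ℝ) • (jacobian (logRotation ε) x + (jacobian (logRotation ε) x)ᵀ)) ≤ √2 := by
  have hs : 0 < ‖x‖ ^ 2 + ε := by positivity
  have hratio : |(‖x‖ ^ 2 + ε)⁻¹ * ‖x‖ ^ 2| ≤ 1 := by
    rw [abs_of_nonneg (by positivity), inv_mul_le_one₀ hs]
    exact le_add_of_nonneg_right hε.le
  rw [logRotation, frobNorm_strain_radialField_quarterTurn (hasDerivAt_log_add_const hs.ne')]
  exact mul_le_of_le_one_right (Real.sqrt_nonneg 2) hratio

lemma log_div_le_frobNorm_jacobian_logRotation_sub (hε : 0 < ε) {x : EuclideanSpace ℝ (Fin 2)}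
    (hx : x ≠ 0) :
    Real.log (‖x‖ ^ 2 / ε) ≤
      frobNorm (jacobian (logRotation ε) x - jacobian (logRotation ε) 0) := by
  have hx_pos : 0 < ‖x‖ ^ 2 := by positivity
  have entry (y : EuclideanSpace ℝ (Fin 2)) : jacobian (logRotation ε) y 1 0 =
      Real.log (‖y‖ ^ 2 + ε) + 2 * (‖y‖ ^ 2 + ε)⁻¹ * y 0 ^ 2 :=
    congr_fun₂ (jacobian_radialField_quarterTurn (hasDerivAt_log_add_const (by positivity))) 1 0
  calc Real.log (‖x‖ ^ 2 / ε)
      = Real.log (‖x‖ ^ 2) - Real.log ε := Real.log_div hx_pos.ne' hε.ne'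
    _ ≤ Real.log (‖x‖ ^ 2 + ε) + 2 * (‖x‖ ^ 2 + ε)⁻¹ * x 0 ^ 2 - Real.log ε := by
      gcongr
      exact (Real.log_le_log hx_pos (le_add_of_nonneg_right hε.le)).trans
        (le_add_of_nonneg_right (by positivity))
    _ = (jacobian (logRotation ε) x - jacobian (logRotation ε) 0) 1 0 := by
      simp [entry]
    _ ≤ frobNorm (jacobian (logRotation ε) x - jacobian (logRotation ε) 0) :=
      (le_abs_self _).trans (abs_entry_le_frobNorm _ 1 0)

end LogRotation

theorem korn_second_inequality_fails_Linfty_general {Ω : Set (EuclideanSpace ℝ (Fin 2))}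
    (hΩ : Bornology.IsBounded Ω) (hΩ_nontrivial : Ω.Nontrivial) :
    ¬ ∃ C > (0 : ℝ),
      ∀ u : EuclideanSpace ℝ (Fin 2) → EuclideanSpace ℝ (Fin 2),
        ContDiff ℝ (⊤ : ℕ∞) u →
        sInf {r : ℝ | ∃ A : Matrix (Fin 2) (Fin 2) ℝ, Aᵀ = -A ∧
            r = ⨆ x ∈ Ω, frobNorm (jacobian u x - A)} ≤
          C * ⨆ x ∈ Ω, frobNorm ((1 / 2 : ℝ) • (jacobian u x + (jacobian u x)ᵀ)) := by
  rintro ⟨C, hC, hKorn⟩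
  obtain ⟨c, hc, p, hp, hcp⟩ := hΩ_nontrivial
  have hpc : p - c ≠ 0 := sub_ne_zero.2 hcp.symm
  obtain ⟨ε, hε, hlog⟩ : ∃ ε > 0, Real.log (‖p - c‖ ^ 2 / ε) = 4 * C :=
    ⟨‖p - c‖ ^ 2 / Real.exp (4 * C), by positivity,
      by rw [div_div_cancel₀ (by positivity), Real.log_exp]⟩
  let u := fun x => logRotation ε (x - c)
  have hu {n : WithTop ℕ∞} : ContDiff ℝ n u :=
    (contDiff_logRotation hε).comp (contDiff_id.sub contDiff_const)
  have jacobian_u (x) : jacobian u x = jacobian (logRotation ε) (x - c) := jacobian_comp_sub _ c x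
  have hosc : 4 * C ≤ frobNorm (jacobian u p - jacobian u c) := by
    simpa only [jacobian_u, sub_self, hlog] using
      log_div_le_frobNorm_jacobian_logRotation_sub hε hpc
  have hstrain : ⨆ x ∈ Ω, frobNorm ((1 / 2 : ℝ) • (jacobian u x + (jacobian u x)ᵀ)) ≤ √2 := by
    refine Real.iSup_le (fun x => Real.iSup_le (fun _ => ?_) ?_) ?_
    · simpa only [jacobian_u] using frobNorm_strain_logRotation_le hε (x - c)
    all_goals exact Real.sqrt_nonneg 2
  have hinf := hosc.trans (frobNorm_jacobian_sub_le_two_mul_sInf hu hΩ hp hc)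
  have hsup := (hKorn u hu).trans (mul_le_mul_of_nonneg_left hstrain hC.le)
  have hC_sqrt_two : C * √2 < C * 2 :=
    mul_lt_mul_of_pos_left (Real.sqrt_two_lt_three_halves.trans (by norm_num)) hC
  linarith

/-- (de Leeuw–Mirkil, Mityagin) Failure of Korn's second inequality in
`L^∞`: with `Ω` the open unit ball of `ℝ²`, there is no constant `C > 0` such that for all
smooth `u : ℝ² → ℝ²`,
`inf_{Aᵀ = -A} sup_{x ∈ Ω} ‖Du(x) - A‖_F ≤ C · sup_{x ∈ Ω} ‖(Du(x) + Du(x)ᵀ)/2‖_F`. -/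
theorem korn_second_inequality_fails_Linfty :
    ¬ ∃ C > (0 : ℝ),
      ∀ u : EuclideanSpace ℝ (Fin 2) → EuclideanSpace ℝ (Fin 2),
        ContDiff ℝ (⊤ : ℕ∞) u →
        sInf {r : ℝ | ∃ A : Matrix (Fin 2) (Fin 2) ℝ, Aᵀ = -A ∧
            r = ⨆ x ∈ Metric.ball (0 : EuclideanSpace ℝ (Fin 2)) 1,
              frobNorm (jacobian u x - A)} ≤
          C * ⨆ x ∈ Metric.ball (0 : EuclideanSpace ℝ (Fin 2)) 1,
            frobNorm ((1 / 2 : ℝ) • (jacobian u x + (jacobian u x)ᵀ)) :=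
  korn_second_inequality_fails_Linfty_general Metric.isBounded_ball
    (infinite_of_mem_nhds 0 (Metric.ball_mem_nhds 0 one_pos)).nontrivial
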